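/- arXiv:1903.11939 — 2 statements merged into one kernel-verified Lean document; each statement's English description precedes it below -/
import Mathlib

section
/- Let 1/2 ≤ α ≤ 1 and r > 0. Then E_α(r) ≥ E_{α,α}(r)/r − 1/(Γ(α)·r) + 1 − 1/Γ(2α); equivalently, r·E_α(r) − r ≥ E_{α,α}(r) − 1/Γ(α) − r/Γ(2α). -/
open Real

/-- The Mittag-Leffler function `E_α(r) = ∑ r^k / Γ(1+kα)`. -/
noncomputable def mittagLeffler (α r : ℝ) : ℝ :=
  ∑' k : ℕ, r ^ k / Real.Gamma (1 + k * α)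

/-- The Mittag-Leffler function `E_{α,α}(r) = ∑ r^k / Γ(α+kα)`. -/
noncomputable def mittagLefflerAA (α r : ℝ) : ℝ :=
  ∑' k : ℕ, r ^ k / Real.Gamma (α + k * α)

/-- The digamma function is nonnegative at `3 / 2`, in the form of a bound on Euler's constant. -/
lemma eulerMascheroniConstant_add_two_mul_log_two_le :
    eulerMascheroniConstant + 2 * log 2 ≤ 2 := by
  have h := eulerMascheroniConstant_lt_eulerMascheroniSeq' 16
  have hlog : log ((16 : ℕ) : ℝ) = 4 * log 2 := by
    rw [show ((16 : ℕ) : ℝ) = 2 ^ 4 by norm_num, log_pow]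
    norm_num
  rw [eulerMascheroniSeq', if_neg (by norm_num), hlog] at h
  norm_num [harmonic, Finset.sum_range_succ] at h
  linarith [log_two_gt_d9]

lemma hasDerivAt_Gamma_three_halves :
    HasDerivAt Gamma (√π * (1 - (eulerMascheroniConstant + 2 * log 2) / 2)) (3 / 2) := by
  have h : HasDerivAt (fun s : ℝ => (s - 1) * Gamma (s - 1))
      (√π * (1 - (eulerMascheroniConstant + 2 * log 2) / 2)) (3 / 2) := by
    have hsub : HasDerivAt (fun s : ℝ => s - 1) 1 (3 / 2) := (hasDerivAt_id _).sub_const _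
    have hΓ : HasDerivAt Gamma (-√π * (eulerMascheroniConstant + 2 * log 2)) (3 / 2 - 1) := by
      convert! hasDerivAt_Gamma_one_half using 1
      norm_num
    refine (hsub.mul (hΓ.comp (3 / 2 : ℝ) hsub)).congr_deriv ?_
    simp only [Function.comp_apply, show (3 / 2 - 1 : ℝ) = 1 / 2 by norm_num, Gamma_one_half_eq]
    ring
  refine h.congr_of_eventuallyEq ?_
  filter_upwards [eventually_ne_nhds (show (3 / 2 : ℝ) ≠ 1 by norm_num)] with s hs
  rw [← Gamma_add_one (sub_ne_zero.mpr hs), sub_add_cancel]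

lemma monotoneOn_Gamma_Ici_three_halves : MonotoneOn Gamma (Set.Ici (3 / 2)) := by
  have hmem {x : ℝ} (hx : 3 / 2 ≤ x) : x ∈ Set.Ioi (0 : ℝ) := by
    rw [Set.mem_Ioi]; linarith
  have hmin {x : ℝ} (hx : 3 / 2 < x) : Gamma (3 / 2) ≤ Gamma x := by
    have hslope := convexOn_Gamma.le_slope_of_hasDerivAt (hmem le_rfl) (hmem hx.le) hx
      hasDerivAt_Gamma_three_halves
    have hderiv : 0 ≤ √π * (1 - (eulerMascheroniConstant + 2 * log 2) / 2) :=
      mul_nonneg (sqrt_nonneg _)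
        (by linarith [eulerMascheroniConstant_add_two_mul_log_two_le])
    have h := hderiv.trans hslope
    rw [slope_def_field, le_div_iff₀ (sub_pos.mpr hx)] at h
    linarith
  intro x hx y hy hxy
  rcases (Set.mem_Ici.mp hx).eq_or_lt with rfl | hx'
  · rcases hxy.eq_or_lt with rfl | hy'
    · rfl
    · exact hmin hy'
  · exact convexOn_Gamma.le_right_of_left_le'' (hmem le_rfl) (hmem hy) hx' hxy (hmin hx')

lemma summable_mittagLeffler (α r : ℝ) (hα : 1 / 2 ≤ α) :
    Summable fun k : ℕ => r ^ k / Gamma (1 + k * α) := by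
  have hfac {m : ℕ} (hm : 1 ≤ m) {x : ℝ} (hx : m + 1 ≤ x) : (m.factorial : ℝ) ≤ Gamma x := by
    have hm' : (1 : ℝ) ≤ m := by exact_mod_cast hm
    rw [← Gamma_nat_eq_factorial]
    exact monotoneOn_Gamma_Ici_three_halves (Set.mem_Ici.mpr (by linarith))
      (Set.mem_Ici.mpr (by linarith)) hx
  have hbound {m : ℕ} (hm : 1 ≤ m) {x : ℝ} (hx : m + 1 ≤ x) (y : ℝ) :
      ‖y / Gamma x‖ ≤ |y| / m.factorial := by
    have h := hfac hm hx
    have hpos : (0 : ℝ) < m.factorial := by exact_mod_cast m.factorial_pos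
    rw [norm_eq_abs, abs_div, abs_of_pos (hpos.trans_le h)]
    gcongr
  have hsum := Real.summable_pow_div_factorial (r ^ 2)
  apply Summable.even_add_odd
  · refine hsum.of_norm_bounded_eventually_nat ?_
    filter_upwards [Filter.eventually_ge_atTop 1] with m hm
    refine (hbound hm ?_ _).trans_eq ?_
    · push_cast
      nlinarith [(Nat.cast_nonneg m : (0 : ℝ) ≤ m)]
    · rw [pow_mul, abs_of_nonneg (by positivity)]
  · refine (hsum.mul_left |r|).of_norm_bounded_eventually_nat ?_
    filter_upwards [Filter.eventually_ge_atTop 1] with m hm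
    refine (hbound hm ?_ _).trans_eq ?_
    · push_cast
      nlinarith [(Nat.cast_nonneg m : (0 : ℝ) ≤ m)]
    · rw [pow_succ, pow_mul, abs_mul, abs_of_nonneg (by positivity : 0 ≤ (r ^ 2) ^ m)]
      ring

theorem mittagLeffler_ge (α r : ℝ) (hα : 1 / 2 ≤ α) (hα1 : α ≤ 1) (hr : 0 < r) :
    mittagLeffler α r ≥ mittagLefflerAA α r / r - 1 / (Real.Gamma α * r) +
      1 - 1 / Real.Gamma (2 * α) := by
  have hsum := summable_mittagLeffler α r hα
  have hterm (k : ℕ) : r ^ (k + 2) / Gamma (α + (k + 2 : ℕ) * α) ≤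
      r * (r ^ (k + 1) / Gamma (1 + (k + 1 : ℕ) * α)) := by
    have hk : (0 : ℝ) ≤ k * α := by positivity
    have hΓ : Gamma (1 + (k + 1 : ℕ) * α) ≤ Gamma (α + (k + 2 : ℕ) * α) := by
      push_cast
      apply monotoneOn_Gamma_Ici_three_halves <;> (try rw [Set.mem_Ici]) <;> linarith
    rw [← mul_div_assoc, ← pow_succ']
    exact div_le_div_of_nonneg_left (by positivity) (Gamma_pos_of_pos (by positivity)) hΓ
  have hsum_succ := ((summable_nat_add_iff 1).mpr hsum).mul_left r
  have hsumAA_add_two : Summable fun k : ℕ => r ^ (k + 2) / Gamma (α + (k + 2 : ℕ) * α) :=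
    .of_nonneg_of_le (fun k => div_nonneg (by positivity)
      (Gamma_pos_of_pos (by positivity)).le) hterm hsum_succ
  have hsumAA : Summable fun k : ℕ => r ^ k / Gamma (α + k * α) :=
    (summable_nat_add_iff 2).mp hsumAA_add_two
  have hle := hsumAA_add_two.tsum_le_tsum hterm hsum_succ
  have hE := hsum.sum_add_tsum_nat_add 1
  have hEAA := hsumAA.sum_add_tsum_nat_add 2
  rw [tsum_mul_left] at hle
  simp only [Finset.sum_range_succ, Finset.sum_range_zero, Nat.cast_zero, Nat.cast_one, zero_mul,
    one_mul, add_zero, zero_add, pow_zero, pow_one, Gamma_one, div_one, ← two_mul] at hE hEAA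
  rw [mittagLeffler, mittagLefflerAA, ← hE, ← hEAA, ge_iff_le]
  have hdiv := (div_le_iff₀' hr).mpr hle
  calc _ = 1 + (∑' k : ℕ, r ^ (k + 2) / Gamma (α + (k + 2 : ℕ) * α)) / r := by
        field_simp
        ring
    _ ≤ _ := by gcongr
end

section
/- Let 0 < α < 1, t > 0 and x > 0. Then a_0(x,t) > a_1(x,t)/2. -/
open Real MeasureTheory

/-- The coefficients `a_k(x,t)` obtained by splitting the Fourier integral of the
fundamental solution over the intervals where `cos (xξ)` has a fixed sign. -/
noncomputable def aCoeff (α t x : ℝ) (k : ℕ) : ℝ :=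
  if k = 0 then
    ∫ ξ in (0 : ℝ)..(π / (2 * x)),
      mittagLeffler α ((1 - ξ ^ 2) * t ^ α) * Real.cos (x * ξ)
  else
    (-1 : ℝ) ^ k *
      ∫ ξ in (π * (2 * (k : ℝ) - 1) / (2 * x))..(π * (2 * (k : ℝ) + 1) / (2 * x)),
        mittagLeffler α ((1 - ξ ^ 2) * t ^ α) * Real.cos (x * ξ)

open Set

lemma rpow_mul_exp_neg_le_Gamma {R s : ℝ} (hR : 0 < R) (hs : 0 ≤ s) :
    R ^ s * Real.exp (-R) ≤ Real.Gamma (s + 1) := by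
  have hint := Real.GammaIntegral_convergent (s := s + 1) (by linarith)
  rw [Real.Gamma_eq_integral (by linarith)]
  simp only [add_sub_cancel_right] at hint ⊢
  have hsub : Ioi R ⊆ Ioi (0 : ℝ) := Ioi_subset_Ioi hR.le
  calc R ^ s * Real.exp (-R) = ∫ x in Ioi R, Real.exp (-x) * R ^ s := by
        rw [integral_mul_const, integral_exp_neg_Ioi, mul_comm]
    _ ≤ ∫ x in Ioi R, Real.exp (-x) * x ^ s := by
        refine setIntegral_mono_on ((integrableOn_exp_neg_Ioi R).mul_const _)
          (hint.mono_set hsub) measurableSet_Ioi fun x hx => ?_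
        have : R ≤ x := le_of_lt hx
        gcongr
    _ ≤ ∫ x in Ioi 0, Real.exp (-x) * x ^ s := by
        refine setIntegral_mono_set hint ?_ (LE.le.eventuallyLE hsub)
        filter_upwards [ae_restrict_mem measurableSet_Ioi] with x hx
        have : (0 : ℝ) < x := hx
        simp only [Pi.zero_apply]
        positivity

/-- The two-parameter Mittag-Leffler function `E_{α,α}(r) = ∑ r^k / Γ((k+1)α)`. -/
noncomputable def mittagLefflerDiag (α r : ℝ) : ℝ :=
  ∑' k : ℕ, r ^ k / Real.Gamma ((k + 1) * α)

lemma summable_mittagLefflerDiag {α : ℝ} (hα : 0 < α) (r : ℝ) :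
    Summable fun k : ℕ => r ^ k / Real.Gamma ((k + 1) * α) := by
  set M : ℝ := 2 * |r| + 1 with hM
  have hM0 : 0 < M := by positivity
  set R : ℝ := M ^ (1 / α) with hR
  have hR0 : 0 < R := by positivity
  have hRα : R ^ α = M := by
    rw [hR, ← Real.rpow_mul hM0.le, one_div, inv_mul_cancel₀ hα.ne', Real.rpow_one]
  have hq : |r| / M < 1 := by
    rw [div_lt_one hM0]; linarith [abs_nonneg r]
  have hgeom : Summable fun k : ℕ => ((k : ℝ) * (|r| / M) ^ k + (|r| / M) ^ k) := by
    refine Summable.add ?_ (summable_geometric_of_lt_one (by positivity) hq)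
    simpa using summable_pow_mul_geometric_of_norm_lt_one (R := ℝ) 1
      (r := |r| / M) (by rwa [Real.norm_of_nonneg (by positivity)])
  refine Summable.of_norm_bounded (hgeom.mul_left (α * Real.exp R / M)) fun k => ?_
  have hk : 0 < ((k : ℝ) + 1) * α := by positivity
  have hG := rpow_mul_exp_neg_le_Gamma hR0 hk.le
  rw [Real.Gamma_add_one hk.ne', mul_comm ((k : ℝ) + 1) α, Real.rpow_mul hR0.le, hRα,
    Real.exp_neg] at hG
  norm_cast at hG
  push_cast at hG
  have hΓ : 0 < Real.Gamma (α * ((k : ℝ) + 1)) := Real.Gamma_pos_of_pos (by positivity)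
  rw [norm_div, norm_pow, Real.norm_eq_abs, mul_comm ((k : ℝ) + 1) α, Real.norm_of_nonneg hΓ.le,
    div_le_iff₀ hΓ]
  calc |r| ^ k = |r| ^ k / M ^ (k + 1) * Real.exp R * (M ^ (k + 1) * (Real.exp R)⁻¹) := by
        field_simp
    _ ≤ |r| ^ k / M ^ (k + 1) * Real.exp R * (α * (k + 1) * Real.Gamma (α * (k + 1))) := by
        gcongr
    _ = _ := by rw [div_pow, pow_succ]; field_simp

lemma mittagLefflerDiag_norm_le {α : ℝ} (hα : 0 < α) {r ρ : ℝ} (h : |r| ≤ ρ) (k : ℕ) :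
    ‖r ^ k / Real.Gamma ((k + 1) * α)‖ ≤ ρ ^ k / Real.Gamma ((k + 1) * α) := by
  have hΓ : 0 < Real.Gamma (((k : ℝ) + 1) * α) := Real.Gamma_pos_of_pos (by positivity)
  rw [norm_div, norm_pow, Real.norm_eq_abs, Real.norm_of_nonneg hΓ.le]
  gcongr

lemma continuous_mittagLefflerDiag {α : ℝ} (hα : 0 < α) : Continuous (mittagLefflerDiag α) := by
  refine continuous_iff_continuousAt.2 fun r => ?_
  have hon : ContinuousOn (mittagLefflerDiag α) (Metric.ball 0 (|r| + 1)) := by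
    refine continuousOn_tsum (fun k => by fun_prop) (summable_mittagLefflerDiag hα (|r| + 1))
      fun k y hy => mittagLefflerDiag_norm_le hα ?_ k
    simpa using (mem_ball_zero_iff.1 hy).le
  exact hon.continuousAt (Metric.isOpen_ball.mem_nhds (by simp))

lemma hasDerivAt_mittagLeffler {α : ℝ} (hα : 0 < α) (r : ℝ) :
    HasDerivAt (mittagLeffler α) (mittagLefflerDiag α r / α) r := by
  have hterm (y : ℝ) (k : ℕ) : ((k + 1 : ℕ) : ℝ) * y ^ (k + 1 - 1) /
      Real.Gamma (1 + (k + 1 : ℕ) * α) = y ^ k / Real.Gamma ((k + 1) * α) / α := by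
    have hk : 0 < ((k : ℝ) + 1) * α := by positivity
    have hΓ := (Real.Gamma_pos_of_pos hk).ne'
    push_cast
    rw [add_comm 1, Real.Gamma_add_one hk.ne']
    field_simp
  have hsum (y : ℝ) : Summable fun n : ℕ => (n : ℝ) * y ^ (n - 1) / Real.Gamma (1 + n * α) := by
    rw [← summable_nat_add_iff 1]
    simp only [hterm]
    exact (summable_mittagLefflerDiag hα y).div_const α
  have hderiv := hasDerivAt_tsum_of_isPreconnected (𝕜 := ℝ) (F := ℝ)
    (g := fun (n : ℕ) y => y ^ n / Real.Gamma (1 + n * α))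
    (g' := fun (n : ℕ) y => (n : ℝ) * y ^ (n - 1) / Real.Gamma (1 + n * α))
    (y₀ := 0) (y := r) (hsum (|r| + 1)) (Metric.isOpen_ball (x := (0 : ℝ)) (ε := |r| + 1))
    (convex_ball _ _).isPreconnected
    (fun n y _ => (hasDerivAt_pow n y).div_const _) ?_ (by simp; positivity) ?_ (by simp)
  · refine hderiv.congr_deriv ?_
    rw [(hsum r).tsum_eq_zero_add]
    simp only [hterm, tsum_div_const, mittagLefflerDiag]
    simp
  · intro n y hy
    have hΓ : 0 < Real.Gamma (1 + n * α) := Real.Gamma_pos_of_pos (by positivity)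
    have hy' : |y| ≤ |r| + 1 := by simpa using (mem_ball_zero_iff.1 hy).le
    rw [norm_div, norm_mul, norm_pow, Real.norm_of_nonneg hΓ.le, Real.norm_natCast,
      Real.norm_eq_abs]
    gcongr
  · refine summable_of_ne_finset_zero (s := {0}) fun n hn => ?_
    have : n ≠ 0 := by simpa using hn
    simp [this]

lemma intervalIntegrable_beta {a b t : ℝ} (ha : 0 < a) (hb : 0 < b) (ht : 0 < t) :
    IntervalIntegrable (fun s : ℝ => (1 - s / t) ^ (a - 1) * s ^ (b - 1)) volume 0 t := by
  have h1 : IntervalIntegrable (fun x : ℝ => (1 - x) ^ (a - 1) * x ^ (b - 1)) volume 0 1 := by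
    refine (Complex.betaIntegral_convergent (u := (b : ℂ)) (v := (a : ℂ))
      (by simpa) (by simpa)).norm.congr_uIoo fun x hx => ?_
    rw [uIoo_of_le zero_le_one] at hx
    have h1x : 0 < 1 - x := by linarith [hx.2]
    dsimp only
    rw [norm_mul, ← Complex.ofReal_one, ← Complex.ofReal_sub, ← Complex.ofReal_sub,
      ← Complex.ofReal_sub, Complex.norm_cpow_eq_rpow_re_of_pos hx.1,
      Complex.norm_cpow_eq_rpow_re_of_pos h1x, Complex.ofReal_re, Complex.ofReal_re, mul_comm]
  have h2 := (h1.comp_mul_left (c := t⁻¹)).const_mul (t ^ (b - 1))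
  simp only [zero_div, one_div, inv_inv] at h2
  refine h2.congr_uIoo fun s hs => ?_
  rw [uIoo_of_le ht.le] at hs
  dsimp only
  rw [Real.mul_rpow (by positivity) hs.1.le, Real.inv_rpow ht.le, ← div_eq_inv_mul]
  field_simp

lemma integral_beta {a b t : ℝ} (ha : 0 < a) (hb : 0 < b) (ht : 0 < t) :
    ∫ s in (0 : ℝ)..t, (1 - s / t) ^ (a - 1) * s ^ (b - 1) =
      t ^ b * (Real.Gamma a * Real.Gamma b / Real.Gamma (b + a)) := by
  have h1 : ∫ x in (0 : ℝ)..1, (1 - x) ^ (a - 1) * x ^ (b - 1) =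
      Real.Gamma a * Real.Gamma b / Real.Gamma (b + a) := by
    have h := Complex.betaIntegral_eq_Gamma_mul_div (b : ℂ) (a : ℂ) (by simpa) (by simpa)
    rw [Complex.betaIntegral, ← Complex.ofReal_add, Complex.Gamma_ofReal, Complex.Gamma_ofReal,
      Complex.Gamma_ofReal] at h
    apply Complex.ofReal_injective
    push_cast
    rw [mul_comm (Real.Gamma a : ℂ), ← h, ← intervalIntegral.integral_ofReal]
    refine intervalIntegral.integral_congr_uIoo fun x hx => ?_
    rw [uIoo_of_le zero_le_one] at hx
    rw [Complex.ofReal_mul, Complex.ofReal_cpow (by linarith [hx.2]), Complex.ofReal_cpow hx.1.le,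
      mul_comm]
    push_cast
    rfl
  have h2 := intervalIntegral.integral_comp_div (a := 0) (b := t)
    (fun x : ℝ => t ^ (b - 1) * ((1 - x) ^ (a - 1) * x ^ (b - 1))) ht.ne'
  rw [zero_div, div_self ht.ne', intervalIntegral.integral_const_mul (a := 0) (b := 1), h1, smul_eq_mul, ← mul_assoc,
    mul_comm t, Real.rpow_sub_one ht.ne', div_mul_cancel₀ _ ht.ne'] at h2
  rw [← h2]
  refine intervalIntegral.integral_congr_uIoo fun s hs => ?_
  rw [uIoo_of_le ht.le] at hs
  rw [Real.div_rpow hs.1.le ht.le, Real.rpow_sub_one ht.ne']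
  field_simp

/-- The Volterra integral equation satisfied by `s ↦ E_{α,α}(-s^α)`. -/
lemma mittagLefflerDiag_volterra {α t : ℝ} (hα : 0 < α) (ht : 0 < t) :
    Real.Gamma α * mittagLefflerDiag α (-t ^ α) = 1 - ∫ s in (0 : ℝ)..t,
      (1 - s / t) ^ (α - 1) * s ^ (α - 1) * mittagLefflerDiag α (-s ^ α) := by
  have hΓ := Real.Gamma_pos_of_pos hα
  have hsum := intervalIntegral.hasSum_integral_of_dominated_convergence (μ := volume)
    (a := 0) (b := t)
    (F := fun (k : ℕ) s => (1 - s / t) ^ (α - 1) * s ^ (α - 1) *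
      ((-s ^ α) ^ k / Real.Gamma ((k + 1) * α)))
    (f := fun s => (1 - s / t) ^ (α - 1) * s ^ (α - 1) * mittagLefflerDiag α (-s ^ α))
    (fun k s => (1 - s / t) ^ (α - 1) * s ^ (α - 1) *
      ((t ^ α) ^ k / Real.Gamma ((k + 1) * α)))
    (fun k => by
      refine Measurable.aestronglyMeasurable ?_
      fun_prop) ?_ ?_ ?_ ?_
  · have hterm (k : ℕ) : ∫ s in (0 : ℝ)..t, (1 - s / t) ^ (α - 1) * s ^ (α - 1) *
        ((-s ^ α) ^ k / Real.Gamma ((k + 1) * α)) =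
        -(Real.Gamma α * ((-t ^ α) ^ (k + 1) / Real.Gamma (((k + 1 : ℕ) + 1) * α))) := by
      have hk : 0 < ((k : ℝ) + 1) * α := by positivity
      have hΓk := (Real.Gamma_pos_of_pos hk).ne'
      have hb := integral_beta hα hk ht
      calc _ = ∫ s in (0 : ℝ)..t, (-1) ^ k / Real.Gamma ((k + 1) * α) *
            ((1 - s / t) ^ (α - 1) * s ^ (((k : ℝ) + 1) * α - 1)) := by
            refine intervalIntegral.integral_congr_uIoo fun s hs => ?_
            rw [uIoo_of_le ht.le] at hs
            rw [neg_pow, show ((k : ℝ) + 1) * α - 1 = (α - 1) + α * k by ring,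
              Real.rpow_add hs.1, Real.rpow_mul hs.1.le, Real.rpow_natCast]
            ring
        _ = _ := by
            rw [intervalIntegral.integral_const_mul, hb, neg_pow (t ^ α), mul_comm ((k : ℝ) + 1) α,
              Real.rpow_mul ht.le]
            norm_cast
            push_cast
            rw [show α * ((k : ℝ) + 1) + α = ((k : ℝ) + 1 + 1) * α by ring]
            rw [mul_comm] at hΓk
            field_simp
            ring
    simp only [hterm] at hsum
    rw [← hsum.tsum_eq, tsum_neg, tsum_mul_left, mittagLefflerDiag,
      (summable_mittagLefflerDiag hα _).tsum_eq_zero_add]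
    simp [mul_add, hΓ.ne']
  · refine fun k => ae_of_all _ fun s hs => ?_
    rw [uIoc_of_le ht.le] at hs
    have h0 : 0 ≤ 1 - s / t := by rw [sub_nonneg, div_le_one ht]; exact hs.2
    have hs0 := hs.1.le
    rw [norm_mul, Real.norm_of_nonneg (by positivity)]
    refine mul_le_mul_of_nonneg_left (mittagLefflerDiag_norm_le hα ?_ k) (by positivity)
    rw [abs_neg, abs_of_nonneg (by positivity)]
    exact Real.rpow_le_rpow hs0 hs.2 hα.le
  · exact ae_of_all _ fun s _ => (summable_mittagLefflerDiag hα _).mul_left _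
  · simp only [tsum_mul_left]
    exact (intervalIntegrable_beta hα hα ht).mul_const _
  · exact ae_of_all _ fun s _ => (summable_mittagLefflerDiag hα _).hasSum.mul_left _

lemma mittagLefflerDiag_neg_rpow_pos {α t : ℝ} (hα : 0 < α) (hα1 : α < 1) (ht : 0 ≤ t) :
    0 < mittagLefflerDiag α (-t ^ α) := by
  set W : ℝ → ℝ := fun s => mittagLefflerDiag α (-s ^ α) with hW
  have hΓ := Real.Gamma_pos_of_pos hα
  have hWc : Continuous W :=
    (continuous_mittagLefflerDiag hα).comp (continuous_id.rpow_const fun _ => .inr hα.le).neg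
  have hW0 : 0 < W 0 := by
    have : W 0 = 1 / Real.Gamma α := by
      simp only [hW, Real.zero_rpow hα.ne', neg_zero, mittagLefflerDiag]
      rw [tsum_eq_single 0 fun k hk => by simp [hk]]
      simp
    rw [this]; positivity
  by_contra hneg
  set S : Set ℝ := {s | 0 ≤ s ∧ W s ≤ 0} with hS
  have hSne : S.Nonempty := ⟨t, ht, not_lt.1 hneg⟩
  have hSbdd : BddBelow S := ⟨0, fun s hs => hs.1⟩
  have hScl : IsClosed S :=
    (isClosed_le continuous_const continuous_id).inter (isClosed_le hWc continuous_const)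
  set T : ℝ := sInf S with hT
  obtain ⟨hT0, hWT⟩ : T ∈ S := hScl.csInf_mem hSne hSbdd
  have hTpos : 0 < T := hT0.lt_of_ne fun h => by rw [← h] at hWT; linarith
  have hpos {s : ℝ} (h0 : 0 ≤ s) (hs : s < T) : 0 < W s := by
    by_contra h
    exact absurd (csInf_le hSbdd ⟨h0, not_lt.1 h⟩) (not_le.2 hs)
  set K : ℝ → ℝ → ℝ := fun τ s => (1 - s / τ) ^ (α - 1) * s ^ (α - 1) with hK
  have hKint {τ : ℝ} (hτ : 0 < τ) : IntervalIntegrable (K τ) volume 0 τ :=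
    intervalIntegrable_beta hα hα hτ
  -- The tail mass of the kernel at `T` is eventually smaller than `Γ(α)`.
  obtain ⟨c, hc0, hcT, hc⟩ : ∃ c, 0 < c ∧ c < T ∧
      ∀ s ∈ Icc c T, ∫ σ in s..T, K T σ < Real.Gamma α := by
    have hcont : ContinuousOn (fun s => ∫ σ in s..T, K T σ) (uIcc 0 T) := by
      refine intervalIntegral.continuousOn_primitive_interval_left ?_
      rw [uIcc_of_le hT0]
      exact (intervalIntegrable_iff_integrableOn_Icc_of_le hT0).1 (hKint hTpos)
    have hev := (hcont T right_mem_uIcc).eventually_lt_const (u := Real.Gamma α)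
      (by simpa using hΓ)
    rw [uIcc_of_le hT0, nhdsWithin_Icc_eq_nhdsLE hTpos] at hev
    obtain ⟨l, hl, hsub⟩ := (mem_nhdsLE_iff_exists_Ioc_subset' hTpos).1 hev
    have hl' : l < T := hl
    refine ⟨(max l 0 + T) / 2, ?_, ?_, fun s hs => hsub ⟨?_, hs.2⟩⟩
    · linarith [le_max_right l 0]
    · linarith [max_lt hl' hTpos]
    · have := hs.1
      linarith [le_max_left l 0, max_lt hl' hTpos]
  obtain ⟨m, hm, hmax⟩ := isCompact_Icc.exists_isMaxOn (nonempty_Icc.2 hcT.le) hWc.continuousOn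
  have hWm : 0 < W m := (hpos hc0.le hcT).trans_le (hmax (left_mem_Icc.2 hcT.le))
  have hmT : m < T := hm.2.lt_of_ne fun h => by rw [h] at hWm; linarith
  have hm0 : 0 < m := hc0.trans_le hm.1
  have hvm : Real.Gamma α * W m = 1 - ∫ s in (0 : ℝ)..m, K m s * W s :=
    mittagLefflerDiag_volterra hα hm0
  have hvT : Real.Gamma α * W T = 1 - ∫ s in (0 : ℝ)..T, K T s * W s :=
    mittagLefflerDiag_volterra hα hTpos
  have hmuIcc : m ∈ uIcc 0 T := by rw [uIcc_of_le hT0]; exact ⟨hm0.le, hmT.le⟩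
  have hK1 : IntervalIntegrable (K T) volume 0 m :=
    (hKint hTpos).mono_set (uIcc_subset_uIcc_left hmuIcc)
  have hK2 : IntervalIntegrable (K T) volume m T :=
    (hKint hTpos).mono_set (uIcc_subset_uIcc_right hmuIcc)
  have hsplit := intervalIntegral.integral_add_adjacent_intervals
    (hK1.mul_continuousOn hWc.continuousOn) (hK2.mul_continuousOn hWc.continuousOn)
  have hleft : ∫ s in (0 : ℝ)..m, K T s * W s ≤ ∫ s in (0 : ℝ)..m, K m s * W s := by
    refine intervalIntegral.integral_mono_on_of_le_Ioo hm0.le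
      (hK1.mul_continuousOn hWc.continuousOn) ((hKint hm0).mul_continuousOn hWc.continuousOn)
      fun s hs => ?_
    refine mul_le_mul_of_nonneg_right ?_ (hpos hs.1.le (hs.2.trans hmT)).le
    refine mul_le_mul_of_nonneg_right ?_ (Real.rpow_nonneg hs.1.le _)
    refine Real.rpow_le_rpow_of_nonpos ?_ ?_ (by linarith)
    · rw [sub_pos, div_lt_one hm0]; exact hs.2
    · have := hs.1.le
      gcongr
  have hright : ∫ s in m..T, K T s * W s ≤ (∫ s in m..T, K T s) * W m := by
    rw [← intervalIntegral.integral_mul_const]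
    refine intervalIntegral.integral_mono_on_of_le_Ioo hmT.le
      (hK2.mul_continuousOn hWc.continuousOn) (hK2.mul_const _) fun s hs => ?_
    refine mul_le_mul_of_nonneg_left (hmax ⟨hm.1.trans hs.1.le, hs.2.le⟩) ?_
    refine mul_nonneg (Real.rpow_nonneg ?_ _) (Real.rpow_nonneg (hm0.trans hs.1).le _)
    rw [sub_nonneg, div_le_one hTpos]; exact hs.2.le
  have hlt := mul_lt_mul_of_pos_right (hc m hm) hWm
  have hWT' : Real.Gamma α * W T ≤ 0 := mul_nonpos_of_nonneg_of_nonpos hΓ.le hWT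
  linarith

lemma mittagLefflerDiag_pos {α : ℝ} (hα : 0 < α) (hα1 : α < 1) (r : ℝ) :
    0 < mittagLefflerDiag α r := by
  rcases le_total r 0 with hr | hr
  · have h := mittagLefflerDiag_neg_rpow_pos hα hα1 (t := (-r) ^ α⁻¹)
      (Real.rpow_nonneg (by linarith) _)
    rwa [Real.rpow_inv_rpow (by linarith) hα.ne', neg_neg] at h
  · have hΓ (k : ℕ) : 0 < Real.Gamma (((k : ℝ) + 1) * α) := Real.Gamma_pos_of_pos (by positivity)
    refine (summable_mittagLefflerDiag hα r).tsum_pos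
      (fun k => div_nonneg (by positivity) (hΓ k).le) 0 ?_
    simpa using Real.Gamma_pos_of_pos hα

lemma strictMono_mittagLeffler {α : ℝ} (hα : 0 < α) (hα1 : α < 1) :
    StrictMono (mittagLeffler α) :=
  strictMono_of_deriv_pos fun r => by
    rw [(hasDerivAt_mittagLeffler hα r).deriv]
    exact div_pos (mittagLefflerDiag_pos hα hα1 r) hα

lemma continuous_mittagLeffler {α : ℝ} (hα : 0 < α) : Continuous (mittagLeffler α) :=
  continuous_iff_continuousAt.2 fun r => (hasDerivAt_mittagLeffler hα r).continuousAt

lemma half_neg_integral_mul_cos_lt {g : ℝ → ℝ} (hg : Continuous g)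
    (hanti : StrictAntiOn g (Ici 0)) {x : ℝ} (hx : 0 < x) :
    -(∫ ξ in (π / (2 * x))..(3 * π / (2 * x)), g ξ * Real.cos (x * ξ)) / 2 <
      ∫ ξ in (0 : ℝ)..(π / (2 * x)), g ξ * Real.cos (x * ξ) := by
  set b : ℝ := π / (2 * x) with hb
  set d : ℝ := 3 * π / (2 * x) with hd
  have hb0 : 0 < b := by positivity
  have hbd : b < d := by rw [hb, hd]; gcongr; linarith [Real.pi_pos]
  have hxb : x * b = π / 2 := by rw [hb]; field_simp
  have hxd : x * d = π / 2 + π := by rw [hd]; field_simp; ring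
  have hint (u v : ℝ) : ∫ ξ in u..v, g ξ * Real.cos (x * ξ) =
      (∫ ξ in u..v, (g ξ - g b) * Real.cos (x * ξ)) +
        g b * (x⁻¹ * (Real.sin (x * v) - Real.sin (x * u))) := by
    have hcos : ∫ ξ in u..v, Real.cos (x * ξ) =
        x⁻¹ * (Real.sin (x * v) - Real.sin (x * u)) := by
      rw [intervalIntegral.integral_comp_mul_left (fun ξ => Real.cos ξ) hx.ne', integral_cos,
        smul_eq_mul]
    rw [← hcos, ← intervalIntegral.integral_const_mul, ← intervalIntegral.integral_add]
    · exact intervalIntegral.integral_congr fun ξ _ => by ring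
    all_goals exact Continuous.intervalIntegrable (by fun_prop) _ _
  have h0 : 0 < ∫ ξ in (0 : ℝ)..b, (g ξ - g b) * Real.cos (x * ξ) := by
    refine intervalIntegral.intervalIntegral_pos_of_pos_on
      (Continuous.intervalIntegrable (by fun_prop) _ _) (fun ξ hξ => ?_) hb0
    refine mul_pos (sub_pos.2 (hanti hξ.1.le hb0.le hξ.2)) (Real.cos_pos_of_mem_Ioo ⟨?_, ?_⟩)
    · linarith [mul_pos hx hξ.1, Real.pi_pos]
    · rw [← hxb]; exact mul_lt_mul_of_pos_left hξ.2 hx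
  have h1 : 0 ≤ ∫ ξ in b..d, (g ξ - g b) * Real.cos (x * ξ) := by
    refine intervalIntegral.integral_nonneg hbd.le fun ξ hξ => ?_
    refine mul_nonneg_of_nonpos_of_nonpos
      (sub_nonpos.2 (hanti.antitoneOn hb0.le (hb0.le.trans hξ.1) hξ.1))
      (Real.cos_nonpos_of_pi_div_two_le_of_le ?_ ?_)
    · rw [← hxb]; exact mul_le_mul_of_nonneg_left hξ.1 hx.le
    · rw [add_comm, ← hxd]; exact mul_le_mul_of_nonneg_left hξ.2 hx.le
  rw [hint b d, hint 0 b, hxb, hxd, Real.sin_add_pi, mul_zero, Real.sin_zero, Real.sin_pi_div_two]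
  linarith

theorem aCoeff_zero_gt_half_one (α t x : ℝ) (hα : 0 < α) (hα1 : α < 1) (ht : 0 < t)
    (hx : 0 < x) : aCoeff α t x 0 > aCoeff α t x 1 / 2 := by
  have hcont := continuous_mittagLeffler hα
  have htα : 0 < t ^ α := Real.rpow_pos_of_pos ht α
  have key := half_neg_integral_mul_cos_lt
    (g := fun ξ => mittagLeffler α ((1 - ξ ^ 2) * t ^ α)) (by fun_prop) (fun u hu v _ huv => by
      have hu0 : 0 ≤ u := hu
      refine strictMono_mittagLeffler hα hα1 ?_
      gcongr) hx
  simp only [aCoeff, if_true, one_ne_zero, if_false, Nat.cast_one, pow_one, gt_iff_lt]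
  convert key using 2
  rw [neg_one_mul]
  congr 3 <;> ring
end
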